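/- The map 𝔽₃[T₁,T₂,T₃] × 𝔽₃[T₁,T₂,T₃] → S sending (p,q) to p(a₁,a₂,a₃) + q(a₁,a₂,a₃)·b is injective and its image is exactly the invariant ring S^G. Equivalently, S^G is a free module of rank 2 over the subalgebra A = 𝔽₃[a₁,a₂,a₃] with basis {1, b}. -/

import Mathlib

open Matrix MvPolynomial

set_option synthInstance.maxHeartbeats 1000000
set_option maxHeartbeats 1000000

abbrev F3 : Type := ZMod 3
abbrev G3 : Type := Matrix.SpecialLinearGroup (Fin 2) F3
abbrev S3 : Type := MvPolynomial (Fin 3) F3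

/-- The fixed basis `v₁, v₂, v₃` of the traceless `2 × 2` matrices over `𝔽₃`. -/
def V : Fin 3 → Matrix (Fin 2) (Fin 2) F3 :=
  ![!![0, 1; -1, 0], !![-1, -1; -1, 1], !![1, -1; -1, -1]]

/-- Coordinates of a traceless matrix with respect to the basis `v₁, v₂, v₃`. -/
def coordM : Fin 3 → Matrix (Fin 2) (Fin 2) F3 → F3 :=
  ![fun X => X 1 0 - X 0 1, fun X => X 0 0 - X 0 1 - X 1 0, fun X => -(X 0 0 + X 0 1 + X 1 0)]

/-- Matrix of the (dual) action of `g` on `M*`: `g • x_s = ∑ r, (rep g) s r • x_r`, where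
`(rep g) s r = x_s (g⁻¹ • v_r) = coordM s (g⁻¹ vᵣ g)`, coming from `(g • f)(v) = f(g⁻¹ • v)`. -/
def rep (g : G3) : Matrix (Fin 3) (Fin 3) F3 :=
  Matrix.of fun s r => coordM s ((g⁻¹ : G3) * V r * (g : Matrix (Fin 2) (Fin 2) F3))

/-- The action of `g ∈ SL₂(𝔽₃)` on `S = 𝔽₃[x₁,x₂,x₃]` by algebra automorphisms, given by
substituting `x_s ↦ g • x_s = ∑ r, (rep g) s r • x_r`. -/
noncomputable def actS (g : G3) : S3 →ₐ[F3] S3 :=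
  MvPolynomial.aeval fun s => ∑ r : Fin 3, rep g s r • MvPolynomial.X r

noncomputable def a1 : S3 := X 0 ^ 2 + X 1 ^ 2 + X 2 ^ 2
noncomputable def a2 : S3 := X 0 * X 1 * X 2
noncomputable def a3 : S3 := X 0 ^ 4 + X 1 ^ 4 + X 2 ^ 4
noncomputable def bP : S3 := X 0 ^ 4 * X 1 ^ 2 + X 0 ^ 2 * X 2 ^ 4 + X 1 ^ 4 * X 2 ^ 2
noncomputable def av : Fin 3 → S3 := ![a1, a2, a3]

/-- `Φ(p, q) = p(a₁,a₂,a₃) + q(a₁,a₂,a₃) · b`. -/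
noncomputable def Phi2 (pq : MvPolynomial (Fin 3) F3 × MvPolynomial (Fin 3) F3) : S3 :=
  aeval av pq.1 + aeval av pq.2 * bP

/-! The element `t` permutes the variables cyclically and `i` changes two signs, so an invariant `f`
is fixed by all even sign changes and all even permutations. The sign changes give
`f = g(x²) + x₁x₂x₃ h(x²)` with unique `g`, `h`, which are therefore invariant under `A₃`.

If `g` is invariant under `Aₙ` and `τ` is a transposition, then `g - τ g` is alternating, hence
divisible by the Vandermonde determinant. For the cubic `c` with `b = c(x²)`, `c - τ c` is that
determinant up to sign, so `g = p + q c` with `p`, `q` symmetric. In characteristic 3 the elementary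
symmetric polynomials in the `x_s²` are `a₁`, `a₃ - a₁²`, `a₂²`; hence `f ∈ A + A b`.

Each `x_s²` is a root of a monic cubic over `A`, so `S` is integral over `A` and `a₁`, `a₂`, `a₃`
are algebraically independent. They are symmetric and `b` is not, which makes `1`, `b` independent
over `A`. -/

section SignChange

variable {σ R : Type*} [DecidableEq σ] [CommRing R]

/-- The algebra automorphism `x_i ↦ -x_i` fixing the other variables. -/
noncomputable def signChange (R : Type*) [CommRing R] (i : σ) :
    MvPolynomial σ R →ₐ[R] MvPolynomial σ R :=
  aeval (Function.update X i (-X i))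

lemma signChange_X (i j : σ) :
    signChange R i (X j) = if j = i then -X j else X j := by
  rw [signChange, aeval_X, Function.update_apply]
  split_ifs with h
  · rw [h]
  · rfl

lemma signChange_signChange (i : σ) (f : MvPolynomial σ R) :
    signChange R i (signChange R i f) = f := by
  have h : (signChange R i).comp (signChange R i) = AlgHom.id R (MvPolynomial σ R) := by
    ext1 j
    by_cases hj : j = i <;> simp [signChange_X, hj]
  exact DFunLike.congr_fun h f

lemma rename_signChange (π : Equiv.Perm σ) (i : σ) (f : MvPolynomial σ R) :
    rename π (signChange R i f) = signChange R (π i) (rename π f) := by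
  have h : (rename π).comp (signChange R i) = (signChange R (π i)).comp (rename π) := by
    ext1 j
    by_cases hj : j = i <;> simp [signChange_X, hj]
  exact DFunLike.congr_fun h f

lemma signChange_expand_two (i : σ) (f : MvPolynomial σ R) :
    signChange R i (expand 2 f) = expand 2 f := by
  have h : (signChange R i).comp (expand 2) = expand 2 := by
    ext1 j
    by_cases hj : j = i <;> simp [signChange_X, hj]
  exact DFunLike.congr_fun h f

lemma signChange_prod_X [Fintype σ] (i : σ) :
    signChange R i (∏ j, X j) = -∏ j, X j := by
  simp only [map_prod, signChange_X]
  rw [← Finset.mul_prod_erase _ _ (Finset.mem_univ i),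
    ← Finset.mul_prod_erase _ X (Finset.mem_univ i), if_pos rfl, neg_mul]
  congr 2
  exact Finset.prod_congr rfl fun j hj => if_neg (Finset.ne_of_mem_erase hj)

lemma signChange_monomial (i : σ) (m : σ →₀ ℕ) (c : R) :
    signChange R i (monomial m c) = monomial m ((-1) ^ m i * c) := by
  rw [signChange, aeval_monomial, monomial_eq,
    ← Finsupp.mul_prod_erase' m i _ fun _ => pow_zero _,
    ← Finsupp.mul_prod_erase' m i (fun j k => (X j : MvPolynomial σ R) ^ k) fun _ => pow_zero _]
  have h : ((m.erase i).prod fun j k => Function.update X i (-X i) j ^ k) =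
      (m.erase i).prod fun j k => (X j : MvPolynomial σ R) ^ k :=
    Finset.prod_congr rfl fun j hj => by
      rw [Finsupp.support_erase] at hj
      simp only [Function.update_of_ne (Finset.ne_of_mem_erase hj)]
  rw [h, Function.update_self, neg_pow, algebraMap_eq, C_mul, C_pow, C_neg, C_1]
  ring

lemma coeff_signChange (i : σ) (f : MvPolynomial σ R) (m : σ →₀ ℕ) :
    coeff m (signChange R i f) = (-1) ^ m i * coeff m f := by
  induction f using MvPolynomial.induction_on' with
  | add p q hp hq => rw [map_add, coeff_add, coeff_add, hp, hq, mul_add]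
  | monomial n c =>
    rw [signChange_monomial, coeff_monomial, coeff_monomial]
    split_ifs with h
    · rw [h]
    · rw [mul_zero]

variable [NoZeroDivisors R] {f : MvPolynomial σ R}

lemma even_iff_even_of_mem_support (h2 : (2 : R) ≠ 0)
    (hf : ∀ i j, signChange R i f = signChange R j f) {m : σ →₀ ℕ} (hm : m ∈ f.support)
    (i j : σ) : Even (m i) ↔ Even (m j) := by
  have hc : (-1) ^ m i * coeff m f = (-1) ^ m j * coeff m f := by
    rw [← coeff_signChange, ← coeff_signChange, hf i j]
  have hc0 : 2 * coeff m f ≠ 0 := mul_ne_zero h2 (mem_support_iff.1 hm)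
  rcases Nat.even_or_odd (m i) with hi | hi <;> rcases Nat.even_or_odd (m j) with hj | hj
  · simp only [hi, hj]
  · rw [hi.neg_one_pow, hj.neg_one_pow] at hc
    exact absurd (by linear_combination hc) hc0
  · rw [hi.neg_one_pow, hj.neg_one_pow] at hc
    exact absurd (by linear_combination -hc) hc0
  · simp only [Nat.not_even_iff_odd.2 hi, Nat.not_even_iff_odd.2 hj]

lemma exists_eq_expand_two_add_prod_X_mul [Fintype σ] (h2 : (2 : R) ≠ 0)
    (hf : ∀ i j, signChange R i f = signChange R j f) :
    ∃ g h, f = expand 2 g + (∏ i, X i) * expand 2 h := by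
  rw [f.as_sum]
  refine Finset.sum_induction _ (fun f => ∃ g h, f = expand 2 g + (∏ i, X i) * expand 2 h)
    ?_ ⟨0, 0, by simp⟩ fun m hm => ?_
  · rintro _ _ ⟨g, h, rfl⟩ ⟨g', h', rfl⟩
    exact ⟨g + g', h + h', by simp only [map_add]; ring⟩
  let n : σ →₀ ℕ := Finsupp.equivFunOnFinite.symm fun i => m i / 2
  by_cases heven : ∀ i, Even (m i)
  · have hmn : m = 2 • n := by
      ext i
      exact (Nat.two_mul_div_two_of_even (heven i)).symm
    refine ⟨monomial n (coeff m f), 0, ?_⟩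
    rw [map_zero, mul_zero, add_zero, expand_monomial, ← hmn]
  · obtain ⟨i₀, hi₀⟩ := not_forall.1 heven
    have hodd (i : σ) : Odd (m i) := by
      rwa [← Nat.not_even_iff_odd, even_iff_even_of_mem_support h2 hf hm i i₀]
    have hmn : m = Finsupp.equivFunOnFinite.symm 1 + 2 • n := by
      ext i
      exact (add_comm _ _).trans (Nat.two_mul_div_two_add_one_of_odd (hodd i)) |>.symm
    have hX : ∏ i, X i = monomial (Finsupp.equivFunOnFinite.symm (1 : σ → ℕ)) (1 : R) := by
      rw [monomial_eq, Finsupp.prod_fintype _ _ fun _ => pow_zero _]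
      simp
    refine ⟨0, monomial n (coeff m f), ?_⟩
    rw [map_zero, zero_add, expand_monomial, hX, monomial_mul, one_mul, ← hmn]

end SignChange

lemma eq_of_expand_two_add_prod_X_mul_eq {σ R : Type*} [Fintype σ] [Nonempty σ]
    [CommRing R] [NoZeroDivisors R] (h2 : (2 : R) ≠ 0)
    {g h g' h' : MvPolynomial σ R}
    (heq : expand 2 g + (∏ i, X i) * expand 2 h = expand 2 g' + (∏ i, X i) * expand 2 h') :
    g = g' ∧ h = h' := by
  classical
  have : Nontrivial R := nontrivial_of_ne 2 0 h2
  have h2' : (2 : MvPolynomial σ R) ≠ 0 := by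
    rw [← map_ofNat C]
    exact C_ne_zero.2 h2
  have heq' := congrArg (signChange R (Classical.arbitrary σ)) heq
  simp only [map_add, map_mul, signChange_expand_two, signChange_prod_X] at heq'
  have hg : expand 2 g = expand 2 g' := mul_left_cancel₀ h2' (by linear_combination heq + heq')
  have hX : ∏ i, (X i : MvPolynomial σ R) ≠ 0 := Finset.prod_ne_zero_iff.2 fun i _ => X_ne_zero i
  rw [hg, add_right_inj] at heq
  exact ⟨expand_injective two_pos hg, expand_injective two_pos (mul_left_cancel₀ hX heq)⟩

lemma prod_dvd_of_prime_of_pairwise_not_dvd {ι M : Type*} [CommMonoidWithZero M] {s : Finset ι}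
    {p : ι → M} {n : M} (hp : ∀ i ∈ s, Prime (p i))
    (hpair : (s : Set ι).Pairwise fun i j => ¬ p i ∣ p j) (hn : ∀ i ∈ s, p i ∣ n) :
    ∏ i ∈ s, p i ∣ n := by
  classical
  induction s using Finset.induction_on with
  | empty => exact one_dvd n
  | insert a s ha ih =>
    simp only [Finset.mem_insert, forall_eq_or_imp] at hp hn
    obtain ⟨k, rfl⟩ := ih hp.2 (hpair.mono (Finset.coe_subset.2 (Finset.subset_insert a s))) hn.2
    have hnot : ¬ p a ∣ ∏ i ∈ s, p i := fun h => by
      obtain ⟨i, hi, hai⟩ := hp.1.exists_mem_finset_dvd h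
      exact hpair (Finset.mem_insert_self a s) (Finset.mem_insert_of_mem hi)
        (ne_of_mem_of_not_mem hi ha).symm hai
    rw [Finset.prod_insert ha, mul_comm]
    exact mul_dvd_mul_left _ ((hp.1.dvd_or_dvd hn.1).resolve_left hnot)

section Vandermonde

variable {σ R : Type*} [CommRing R]

lemma dvd_algHom_sub_algHom {A : Type*} [CommRing A] [Algebra R A]
    (φ ψ : MvPolynomial σ R →ₐ[R] A) (d : A) (h : ∀ i, d ∣ φ (X i) - ψ (X i))
    (f : MvPolynomial σ R) : d ∣ φ f - ψ f := by
  have hφψ : (Ideal.Quotient.mkₐ R (Ideal.span {d})).comp φ =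
      (Ideal.Quotient.mkₐ R (Ideal.span {d})).comp ψ := by
    ext i
    simpa [Ideal.Quotient.eq, Ideal.mem_span_singleton] using h i
  simpa [Ideal.Quotient.eq, Ideal.mem_span_singleton] using DFunLike.congr_fun hφψ f

lemma X_sub_X_dvd_sub_rename_swap [DecidableEq σ] (i j : σ) (f : MvPolynomial σ R) :
    X i - X j ∣ f - rename (Equiv.swap i j) f := by
  refine dvd_algHom_sub_algHom (AlgHom.id R _) (rename (Equiv.swap i j)) _ (fun k => ?_) f
  rw [AlgHom.id_apply, rename_X]
  rcases eq_or_ne k i with rfl | hi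
  · rw [Equiv.swap_apply_left]
  rcases eq_or_ne k j with rfl | hj
  · rw [Equiv.swap_apply_right, dvd_sub_comm]
  · rw [Equiv.swap_apply_of_ne_of_ne hi hj, sub_self]
    exact dvd_zero _

lemma X_sub_X_dvd_iff [DecidableEq σ] {i j : σ} {f : MvPolynomial σ R} :
    X i - X j ∣ f ↔ rename (Function.update id i j) f = 0 := by
  refine ⟨?_, fun hf => ?_⟩
  · rintro ⟨g, rfl⟩
    rcases eq_or_ne j i with rfl | hij
    · simp
    · simp [hij]
  · have h := dvd_algHom_sub_algHom (AlgHom.id R _) (rename (Function.update id i j)) (X i - X j)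
      (fun k => ?_) f
    · rwa [hf, sub_zero] at h
    · rcases eq_or_ne k i with rfl | hk
      · simp
      · simp [hk]

variable [IsDomain R]

lemma prime_X_sub_X {i j : σ} (hij : i ≠ j) : Prime (X i - X j : MvPolynomial σ R) := by
  classical
  refine ⟨sub_ne_zero.2 (X_injective.ne hij), fun hu => ?_, fun f g hfg => ?_⟩
  · simpa using X_sub_X_dvd_iff.1 (hu.dvd (a := 1))
  · simpa only [X_sub_X_dvd_iff, map_mul, mul_eq_zero] using hfg

lemma det_vandermonde_X_dvd {n : ℕ} {f : MvPolynomial (Fin n) R}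
    (hf : ∀ i j, i < j → X j - X i ∣ f) :
    (vandermonde (X : Fin n → MvPolynomial (Fin n) R)).det ∣ f := by
  rw [det_vandermonde, Finset.prod_sigma']
  refine prod_dvd_of_prime_of_pairwise_not_dvd
    (fun ⟨i, j⟩ hij => prime_X_sub_X (by simpa using hij : i < j).ne')
    ?_ fun ⟨i, j⟩ hij => hf i j (by simpa using hij)
  rintro ⟨i, j⟩ hij ⟨k, l⟩ hkl hne
  simp only [Finset.coe_sigma, Set.mem_sigma_iff, Finset.mem_coe, Finset.mem_univ, true_and,
    Finset.mem_Ioi] at hij hkl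
  rw [X_sub_X_dvd_iff, map_sub, rename_X, rename_X, sub_eq_zero, X_injective.eq_iff]
  simp only [Function.update_apply, id]
  grind

end Vandermonde

section Symmetric

variable {σ R : Type*} [CommRing R]

lemma expand_psum [Fintype σ] (p k : ℕ) :
    expand p (psum σ R k) = psum σ R (p * k) := by
  simp only [psum, map_sum, map_pow, expand_X, pow_mul]

lemma isSymmetric_prod_X [Fintype σ] : (∏ i, X i : MvPolynomial σ R).IsSymmetric := fun π => by
  simp only [map_prod, rename_X]
  exact Equiv.prod_comp π X

lemma eq_of_isSymmetric_add_mul [IsDomain R] {c p q p' q' : MvPolynomial σ R}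
    (hc : ¬ c.IsSymmetric) (hp : p.IsSymmetric) (hq : q.IsSymmetric) (hp' : p'.IsSymmetric)
    (hq' : q'.IsSymmetric) (h : p + q * c = p' + q' * c) : p = p' ∧ q = q' := by
  obtain ⟨τ, hτ⟩ := not_forall.1 hc
  have hτh := congrArg (rename τ) h
  simp only [map_add, map_mul, hp τ, hq τ, hp' τ, hq' τ] at hτh
  have hqq' : q = q' :=
    mul_right_cancel₀ (sub_ne_zero.2 hτ) (by linear_combination hτh - h)
  rw [hqq', add_left_inj] at h
  exact ⟨h, hqq'⟩

end Symmetric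

section AltInvariant

variable {σ R : Type*} [Fintype σ] [DecidableEq σ] [CommRing R]

/-- Invariance under all even permutations of the variables. -/
def IsAltInvariant (f : MvPolynomial σ R) : Prop :=
  ∀ π ∈ alternatingGroup σ, rename π f = f

namespace IsAltInvariant

variable {c f : MvPolynomial σ R} {π ρ τ : Equiv.Perm σ}

lemma rename_eq_rename (hf : IsAltInvariant f) (h : Equiv.Perm.sign π = Equiv.Perm.sign ρ) :
    rename π f = rename ρ f := by
  have hmem : ρ⁻¹ * π ∈ alternatingGroup σ := by
    rw [Equiv.Perm.mem_alternatingGroup, map_mul, map_inv, h, inv_mul_cancel]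
  rw [← mul_inv_cancel_left ρ π, Equiv.Perm.coe_mul, ← rename_rename, hf _ hmem]

lemma isSymmetric (hf : IsAltInvariant f) (hτ : Equiv.Perm.sign τ = -1) (hfτ : rename τ f = f) :
    f.IsSymmetric := fun π => by
  rcases Int.units_eq_one_or (Equiv.Perm.sign π) with h | h
  · exact hf π h
  · rw [hf.rename_eq_rename (h.trans hτ.symm), hfτ]

lemma sub_rename (hf : IsAltInvariant f) (τ : Equiv.Perm σ) :
    IsAltInvariant (f - rename τ f) := fun π hπ => by
  rw [map_sub, hf π hπ, rename_rename, ← Equiv.Perm.coe_mul, hf.rename_eq_rename (ρ := τ)]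
  rw [map_mul, Equiv.Perm.mem_alternatingGroup.1 hπ, one_mul]

lemma rename_sub_rename (hf : IsAltInvariant f) (hτ : Equiv.Perm.sign τ = -1) :
    rename τ (f - rename τ f) = -(f - rename τ f) := by
  have h : rename τ (rename τ f) = f := by
    rw [rename_rename, ← Equiv.Perm.coe_mul]
    exact hf _ (by rw [Equiv.Perm.mem_alternatingGroup, map_mul, hτ, Int.units_mul_self])
  rw [map_sub, h, neg_sub]

lemma exists_isSymmetric_add_mul [IsDomain R] (hf : IsAltInvariant f) (hc : IsAltInvariant c)
    (hτ : Equiv.Perm.sign τ = -1) (hcτ : c - rename τ c ≠ 0)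
    (hdvd : c - rename τ c ∣ f - rename τ f) :
    ∃ p q : MvPolynomial σ R, p.IsSymmetric ∧ q.IsSymmetric ∧ f = p + q * c := by
  obtain ⟨q, hq⟩ := hdvd
  have hq_alt : IsAltInvariant q := fun π hπ => by
    apply mul_left_cancel₀ hcτ
    rw [← hq, ← hf.sub_rename τ π hπ, hq, map_mul, hc.sub_rename τ π hπ]
  have hqτ : rename τ q = q := by
    have h := congrArg (rename τ) hq
    rw [map_mul, hf.rename_sub_rename hτ, hc.rename_sub_rename hτ, neg_mul, neg_inj, hq] at h
    exact (mul_left_cancel₀ hcτ h).symm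
  have hp_alt : IsAltInvariant (f - q * c) := fun π hπ => by
    rw [map_sub, map_mul, hf π hπ, hc π hπ, hq_alt π hπ]
  refine ⟨f - q * c, q, hp_alt.isSymmetric hτ ?_, hq_alt.isSymmetric hτ hqτ, by ring⟩
  rw [map_sub, map_mul, hqτ]
  linear_combination -hq

lemma det_vandermonde_dvd_sub_rename [IsDomain R] {n : ℕ} {f : MvPolynomial (Fin n) R}
    {τ : Equiv.Perm (Fin n)} (hf : IsAltInvariant f) (hτ : Equiv.Perm.sign τ = -1) :
    (vandermonde (X : Fin n → MvPolynomial (Fin n) R)).det ∣ f - rename τ f :=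
  det_vandermonde_X_dvd fun i j hij => by
    rw [hf.rename_eq_rename (hτ.trans (Equiv.Perm.sign_swap hij.ne').symm)]
    exact X_sub_X_dvd_sub_rename_swap j i f

end IsAltInvariant

theorem exists_isSymmetric_eq_expand_two_add_mul [IsDomain R] {n : ℕ} [NeZero n] (h2 : (2 : R) ≠ 0)
    {f c : MvPolynomial (Fin n) R} (hsign : ∀ i j, signChange R i f = signChange R j f)
    (hf : IsAltInvariant f) (hc : IsAltInvariant c)
    {τ : Equiv.Perm (Fin n)} (hτ : Equiv.Perm.sign τ = -1)
    (hcτ : c - rename τ c ∣ (vandermonde (X : Fin n → MvPolynomial (Fin n) R)).det) :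
    ∃ p q p' q' : MvPolynomial (Fin n) R,
      (p.IsSymmetric ∧ q.IsSymmetric ∧ p'.IsSymmetric ∧ q'.IsSymmetric) ∧
      f = (expand 2 p + (∏ i, X i) * expand 2 p') +
        (expand 2 q + (∏ i, X i) * expand 2 q') * expand 2 c := by
  obtain ⟨g, h, rfl⟩ := exists_eq_expand_two_add_prod_X_mul h2 hsign
  have hgh (π) (hπ : π ∈ alternatingGroup (Fin n)) : rename π g = g ∧ rename π h = h := by
    apply eq_of_expand_two_add_prod_X_mul_eq h2
    rw [← rename_expand, ← rename_expand, ← isSymmetric_prod_X π, ← map_mul, ← map_add, hf π hπ,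
      isSymmetric_prod_X π]
  have hg : IsAltInvariant g := fun π hπ => (hgh π hπ).1
  have hh : IsAltInvariant h := fun π hπ => (hgh π hπ).2
  have hc0 : c - rename τ c ≠ 0 :=
    ne_zero_of_dvd_ne_zero (det_vandermonde_ne_zero_iff.2 X_injective) hcτ
  obtain ⟨p, q, hp, hq, rfl⟩ := hg.exists_isSymmetric_add_mul hc hτ hc0
    (hcτ.trans (hg.det_vandermonde_dvd_sub_rename hτ))
  obtain ⟨p', q', hp', hq', rfl⟩ := hh.exists_isSymmetric_add_mul hc hτ hc0
    (hcτ.trans (hh.det_vandermonde_dvd_sub_rename hτ))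
  refine ⟨p, q, p', q', ⟨hp, hq, hp', hq'⟩, ?_⟩
  simp only [map_add, map_mul]
  ring

end AltInvariant

section Cyclic

variable {R : Type*} [CommRing R]

lemma isAltInvariant_of_rename_finRotate {f : MvPolynomial (Fin 3) R}
    (hf : rename (finRotate 3) f = f) : IsAltInvariant f := fun π hπ => by
  have hcyc : ∀ π : Equiv.Perm (Fin 3), Equiv.Perm.sign π = 1 →
      π = 1 ∨ π = finRotate 3 ∨ π = finRotate 3 * finRotate 3 := by decide
  rcases hcyc π hπ with rfl | rfl | rfl
  · rw [Equiv.Perm.coe_one, rename_id_apply]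
  · exact hf
  · rw [Equiv.Perm.coe_mul, ← rename_rename, hf, hf]

/-- The cyclically symmetric cubic `y₀²y₁ + y₀y₂² + y₁²y₂`, from which `b` arises by the
substitution `y_s = x_s²`. -/
noncomputable def cyclicCubic (R : Type*) [CommRing R] : MvPolynomial (Fin 3) R :=
  X 0 ^ 2 * X 1 + X 0 * X 2 ^ 2 + X 1 ^ 2 * X 2

lemma isAltInvariant_cyclicCubic : IsAltInvariant (cyclicCubic R) := by
  apply isAltInvariant_of_rename_finRotate
  simp only [cyclicCubic, map_add, map_mul, map_pow, rename_X, finRotate_apply, Fin.isValue,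
    zero_add, Fin.reduceAdd]
  ring

lemma cyclicCubic_sub_rename_swap :
    cyclicCubic R - rename (Equiv.swap 0 1) (cyclicCubic R) =
      -(vandermonde (X : Fin 3 → MvPolynomial (Fin 3) R)).det := by
  have h2 : Equiv.swap (0 : Fin 3) 1 2 = 2 := by decide
  simp only [cyclicCubic, map_add, map_mul, map_pow, rename_X, Equiv.swap_apply_left,
    Equiv.swap_apply_right, h2, det_fin_three, vandermonde_apply, Fin.isValue, Fin.coe_ofNat_eq_mod,
    Nat.zero_mod, Nat.one_mod, Nat.reduceMod, pow_zero, pow_one]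
  ring

lemma not_isSymmetric_cyclicCubic [IsDomain R] : ¬ (cyclicCubic R).IsSymmetric := fun h => by
  have h0 := cyclicCubic_sub_rename_swap (R := R)
  rw [h, sub_self, zero_eq_neg] at h0
  exact det_vandermonde_ne_zero_iff.2 X_injective h0

end Cyclic

section Monomial

variable {σ R : Type*} [CommRing R] {φ : MvPolynomial σ R →ₐ[R] MvPolynomial σ R}
  {π : Equiv.Perm σ} {ε : σ → R}

lemma map_expand_two_of_map_X (hφ : ∀ s, φ (X s) = C (ε s) * X (π s)) (hε : ∀ s, ε s ^ 2 = 1)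
    (f : MvPolynomial σ R) : φ (expand 2 f) = expand 2 (rename π f) := by
  have h : φ.comp (expand 2) = (expand 2).comp (rename π) := by
    ext1 s
    simp [hφ, mul_pow, ← C_pow, hε]
  exact DFunLike.congr_fun h f

lemma map_prod_X_of_map_X [Fintype σ] (hφ : ∀ s, φ (X s) = C (ε s) * X (π s))
    (hε : ∏ s, ε s = 1) : φ (∏ s, X s) = ∏ s, X s := by
  simp only [map_prod, hφ, Finset.prod_mul_distrib]
  rw [← map_prod, hε, C_1, one_mul, Equiv.prod_comp π X]

end Monomial

lemma algebraicIndependent_of_isIntegral_X {σ R : Type*} [Finite σ] [CommRing R] [IsDomain R]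
    {x : σ → MvPolynomial σ R}
    (hx : ∀ i, IsIntegral (Algebra.adjoin R (Set.range x)) (X i : MvPolynomial σ R)) :
    AlgebraicIndependent R x := by
  have : Algebra.IsIntegral (Algebra.adjoin R (Set.range x)) (MvPolynomial σ R) := ⟨fun f => by
    induction f using MvPolynomial.induction_on with
    | C c => exact (isIntegral_algebraMap (R := R) (x := c)).tower_top
    | add p q hp hq => exact hp.add hq
    | mul_X p i hp => exact hp.mul (hx i)⟩
  refine (Algebra.IsAlgebraic.isTranscendenceBasis_of_lift_le_trdeg_of_finite R x ?_).1
  rw [MvPolynomial.trdeg_of_isDomain]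
  simp

section Generators

lemma three_eq_zero : (3 : S3) = 0 := mod_cast CharP.cast_eq_zero S3 3

lemma a1_eq_psum : a1 = psum (Fin 3) F3 2 := by
  simp only [a1, psum, Fin.sum_univ_three]

lemma a2_eq_prod_X : a2 = ∏ i : Fin 3, X i := by
  simp only [a2, Fin.prod_univ_three]

lemma a3_eq_psum : a3 = psum (Fin 3) F3 4 := by
  simp only [a3, psum, Fin.sum_univ_three]

lemma bP_eq_expand : bP = expand 2 (cyclicCubic F3) := by
  simp only [bP, cyclicCubic, map_add, map_mul, map_pow, expand_X]
  ring

lemma forall_av {P : S3 → Prop} (h₁ : P a1) (h₂ : P a2) (h₃ : P a3) (i : Fin 3) : P (av i) := by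
  fin_cases i <;> assumption

lemma isSymmetric_av : ∀ i, (av i).IsSymmetric := by
  refine forall_av ?_ ?_ ?_
  · rw [a1_eq_psum]
    exact psum_isSymmetric _ _ 2
  · rw [a2_eq_prod_X]
    exact isSymmetric_prod_X
  · rw [a3_eq_psum]
    exact psum_isSymmetric _ _ 4

lemma isSymmetric_aeval_av (p : S3) : (aeval av p : S3).IsSymmetric := fun π => by
  have h : (rename π).comp (aeval av) = (aeval av : S3 →ₐ[F3] S3) := by
    ext1 i
    simpa using isSymmetric_av i π
  exact DFunLike.congr_fun h p

lemma not_isSymmetric_bP : ¬ bP.IsSymmetric := fun h =>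
  not_isSymmetric_cyclicCubic (R := F3) fun π => expand_injective two_pos <| by
    rw [← rename_expand, ← bP_eq_expand, h]

lemma av_mem_range (i : Fin 3) : av i ∈ (aeval av : S3 →ₐ[F3] S3).range := ⟨X i, by simp⟩

lemma esymm_two_eq_psum_sub : esymm (Fin 3) F3 2 = psum (Fin 3) F3 2 - psum (Fin 3) F3 1 ^ 2 := by
  have newton := mul_esymm_eq_sum (Fin 3) F3 2
  have hfilter : {a ∈ Finset.HasAntidiagonal.antidiagonal 2 | a.1 < 2} =
      {((0 : ℕ), 2), (1, 1)} := by decide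
  rw [hfilter, Finset.sum_pair (by decide), esymm_zero, esymm_one, ← psum_one] at newton
  push_cast at newton
  linear_combination -newton + esymm (Fin 3) F3 2 * three_eq_zero

lemma expand_two_esymm_one : expand 2 (esymm (Fin 3) F3 1) = a1 := by
  rw [esymm_one, ← psum_one, expand_psum, a1_eq_psum]

lemma expand_two_esymm_two : expand 2 (esymm (Fin 3) F3 2) = a3 - a1 ^ 2 := by
  rw [esymm_two_eq_psum_sub, map_sub, map_pow, expand_psum, expand_psum, a1_eq_psum, a3_eq_psum]

lemma expand_two_esymm_three : expand 2 (esymm (Fin 3) F3 3) = a2 ^ 2 := by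
  have h : esymm (Fin 3) F3 3 = ∏ i, X i :=
    (congrArg (Finset.sum · _) (Finset.powersetCard_self Finset.univ)).trans
      (Finset.sum_singleton _ _)
  rw [h, map_prod, a2_eq_prod_X, ← Finset.prod_pow]
  simp only [expand_X]

lemma expand_two_esymm_mem_range (i : Fin 3) :
    expand 2 (esymm (Fin 3) F3 (i + 1)) ∈ (aeval av : S3 →ₐ[F3] S3).range := by
  have h₁ : a1 ∈ (aeval av : S3 →ₐ[F3] S3).range := av_mem_range 0
  have h₂ : a2 ∈ (aeval av : S3 →ₐ[F3] S3).range := av_mem_range 1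
  have h₃ : a3 ∈ (aeval av : S3 →ₐ[F3] S3).range := av_mem_range 2
  fin_cases i
  · exact expand_two_esymm_one ▸ h₁
  · exact expand_two_esymm_two ▸ sub_mem h₃ (pow_mem h₁ 2)
  · exact expand_two_esymm_three ▸ pow_mem h₂ 2

lemma expand_two_mem_range_of_isSymmetric {p : S3} (hp : p.IsSymmetric) :
    expand 2 p ∈ (aeval av : S3 →ₐ[F3] S3).range := by
  obtain ⟨q, hq⟩ := esymmAlgHom_surjective (σ := Fin 3) F3 (n := 3) (Fintype.card_fin 3).le ⟨p, hp⟩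
  have hpq : expand 2 p = aeval (fun i : Fin 3 => expand 2 (esymm (Fin 3) F3 (i + 1))) q := by
    rw [← comp_aeval_apply, ← esymmAlgHom_apply, hq]
  rw [hpq]
  exact Algebra.adjoin_le (Set.range_subset_iff.2 expand_two_esymm_mem_range)
    ((aeval_range _).le (AlgHom.mem_range_self _ q))

lemma algebraicIndependent_av : AlgebraicIndependent F3 av := by
  refine algebraicIndependent_of_isIntegral_X fun i => ?_
  let a (i : Fin 3) : Algebra.adjoin F3 (Set.range av) :=
    ⟨av i, Algebra.subset_adjoin (Set.mem_range_self i)⟩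
  have hfactor (t : S3) : (t - X 0 ^ 2) * (t - X 1 ^ 2) * (t - X 2 ^ 2) =
      t ^ 3 - a1 * t ^ 2 + (a3 - a1 ^ 2) * t - a2 ^ 2 := by
    unfold a1 a2 a3
    linear_combination
      (X 0 ^ 2 * X 1 ^ 2 + X 0 ^ 2 * X 2 ^ 2 + X 1 ^ 2 * X 2 ^ 2) * t * three_eq_zero
  have hroot : (X i ^ 2 : S3) ^ 3 - a1 * (X i ^ 2) ^ 2 + (a3 - a1 ^ 2) * X i ^ 2 - a2 ^ 2 = 0 := by
    rw [← hfactor]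
    fin_cases i <;> simp
  refine IsIntegral.of_pow two_pos ⟨.X ^ 3 - .C (a 0) * .X ^ 2 + .C (a 2 - a 0 ^ 2) * .X -
    .C (a 1 ^ 2), by monicity!, ?_⟩
  have ha (i : Fin 3) : algebraMap (Algebra.adjoin F3 (Set.range av)) S3 (a i) = av i := rfl
  simp only [Polynomial.eval₂_sub, Polynomial.eval₂_add, Polynomial.eval₂_mul,
    Polynomial.eval₂_pow, Polynomial.eval₂_X, Polynomial.eval₂_C, map_sub, map_pow, ha]
  exact hroot

end Generators

section GroupAction

/-- The element `t`, of order three, which permutes the variables cyclically. -/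
def unipotent : G3 := ⟨!![1, 1; 0, 1], by decide⟩

/-- The element `i`, of order four, which changes the signs of `x₂` and `x₃`. -/
def orderFour : G3 := ⟨!![0, 1; -1, 0], by decide⟩

lemma actS_X (g : G3) (s : Fin 3) : actS g (X s) = ∑ r, rep g s r • X r := by
  rw [actS, aeval_X]

lemma actS_unipotent (f : S3) : actS unipotent f = rename (finRotate 3) f := by
  have h : rep unipotent = !![0, 1, 0; 0, 0, 1; 1, 0, 0] := by decide
  have : actS unipotent = rename (finRotate 3) := by
    ext1 j
    fin_cases j <;> simp [actS_X, h, Fin.sum_univ_three]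
  rw [this]

lemma actS_orderFour (f : S3) : actS orderFour f = signChange F3 1 (signChange F3 2 f) := by
  have h : rep orderFour = !![1, 0, 0; 0, -1, 0; 0, 0, -1] := by decide
  have : actS orderFour = (signChange F3 1).comp (signChange F3 2) := by
    ext1 j
    fin_cases j <;> simp [actS_X, h, Fin.sum_univ_three, signChange_X]
  rw [this, AlgHom.comp_apply]

lemma signChange_eq_signChange_of_actS {f : S3} (ht : actS unipotent f = f)
    (hi : actS orderFour f = f) (i j : Fin 3) : signChange F3 i f = signChange F3 j f := by
  rw [actS_unipotent] at ht
  have h12 : signChange F3 1 f = signChange F3 2 f := by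
    have h := congrArg (signChange F3 1) hi
    rw [actS_orderFour, signChange_signChange] at h
    exact h.symm
  have h20 : signChange F3 2 f = signChange F3 0 f := by
    have h := congrArg (rename (finRotate 3)) h12
    rwa [rename_signChange, rename_signChange, ht] at h
  fin_cases i <;> fin_cases j <;> simp [h12, h20]

lemma exists_rep_monomial (g : G3) : ∃ k : Fin 3, (∀ s r, r ≠ s + k → rep g s r = 0) ∧
    (∀ s, rep g s (s + k) ^ 2 = 1) ∧ ∏ s, rep g s (s + k) = 1 := by
  have h : ∀ a b c d : F3, a * d - b * c = 1 → ∃ k : Fin 3,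
      let ρ (s r : Fin 3) := coordM s (!![d, -b; -c, a] * V r * !![a, b; c, d])
      (∀ s r, r ≠ s + k → ρ s r = 0) ∧ (∀ s, ρ s (s + k) ^ 2 = 1) ∧ ∏ s, ρ s (s + k) = 1 := by
    decide
  have hrep (s r : Fin 3) : rep g s r = coordM s
      (!![g 1 1, -g 0 1; -g 1 0, g 0 0] * V r * !![g 0 0, g 0 1; g 1 0, g 1 1]) := by
    rw [rep, Matrix.of_apply, Matrix.SpecialLinearGroup.coe_inv, Matrix.adjugate_fin_two,
      ← Matrix.eta_fin_two]
  have hdet : g 0 0 * g 1 1 - g 0 1 * g 1 0 = 1 := by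
    rw [← Matrix.det_fin_two]
    exact g.2
  simpa only [hrep] using h _ _ _ _ hdet

lemma exists_actS_X (g : G3) : ∃ π ∈ alternatingGroup (Fin 3), ∃ ε : Fin 3 → F3,
    (∀ s, ε s ^ 2 = 1) ∧ ∏ s, ε s = 1 ∧ ∀ s, actS g (X s) = C (ε s) * X (π s) := by
  have heven : ∀ k : Fin 3, Equiv.Perm.sign (Equiv.addRight k) = 1 := by decide
  obtain ⟨k, hzero, hsq, hprod⟩ := exists_rep_monomial g
  refine ⟨Equiv.addRight k, heven k, fun s => rep g s (s + k), hsq, hprod, fun s => ?_⟩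
  rw [actS_X, Finset.sum_eq_single (s + k)]
  · rw [smul_eq_C_mul, Equiv.coe_addRight]
  · intro r _ hr
    rw [hzero s r hr, zero_smul]
  · simp

lemma actS_av (g : G3) : ∀ i, actS g (av i) = av i := by
  obtain ⟨π, -, ε, hsq, hprod, hX⟩ := exists_actS_X g
  have hpsum (k : ℕ) : actS g (psum (Fin 3) F3 (2 * k)) = psum (Fin 3) F3 (2 * k) := by
    rw [← expand_psum, map_expand_two_of_map_X hX hsq, rename_psum]
  refine forall_av (P := fun f => actS g f = f) ?_ ?_ ?_
  · rw [a1_eq_psum]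
    exact hpsum 1
  · rw [a2_eq_prod_X, map_prod_X_of_map_X hX hprod]
  · rw [a3_eq_psum]
    exact hpsum 2

lemma actS_bP (g : G3) : actS g bP = bP := by
  obtain ⟨π, hπ, ε, hsq, -, hX⟩ := exists_actS_X g
  rw [bP_eq_expand, map_expand_two_of_map_X hX hsq, isAltInvariant_cyclicCubic π hπ]

lemma actS_Phi2 (g : G3) (pq : S3 × S3) : actS g (Phi2 pq) = Phi2 pq := by
  have h : (actS g).comp (aeval av) = aeval av := by
    ext1 i
    simpa using actS_av g i
  rw [Phi2, map_add, map_mul, actS_bP, ← AlgHom.comp_apply, ← AlgHom.comp_apply, h]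

end GroupAction

lemma Phi2_injective : Function.Injective Phi2 := by
  rintro ⟨p, q⟩ ⟨p', q'⟩ h
  obtain ⟨hp, hq⟩ := eq_of_isSymmetric_add_mul not_isSymmetric_bP (isSymmetric_aeval_av p)
    (isSymmetric_aeval_av q) (isSymmetric_aeval_av p') (isSymmetric_aeval_av q') h
  rw [algebraicIndependent_av hp, algebraicIndependent_av hq]

lemma exists_Phi2_eq {f : S3} (ht : actS unipotent f = f) (hi : actS orderFour f = f) :
    ∃ pq, Phi2 pq = f := by
  have hA {p p' : S3} (hp : p.IsSymmetric) (hp' : p'.IsSymmetric) :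
      expand 2 p + (∏ i, X i) * expand 2 p' ∈ (aeval av : S3 →ₐ[F3] S3).range :=
    add_mem (expand_two_mem_range_of_isSymmetric hp) <|
      mul_mem (a2_eq_prod_X ▸ av_mem_range 1) (expand_two_mem_range_of_isSymmetric hp')
  obtain ⟨p, q, p', q', ⟨hp, hq, hp', hq'⟩, hf⟩ := exists_isSymmetric_eq_expand_two_add_mul
    (c := cyclicCubic F3) (τ := Equiv.swap 0 1) (by decide)
    (signChange_eq_signChange_of_actS ht hi)
    (isAltInvariant_of_rename_finRotate (actS_unipotent f ▸ ht)) isAltInvariant_cyclicCubic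
    (Equiv.Perm.sign_swap (by decide)) (by rw [cyclicCubic_sub_rename_swap, neg_dvd])
  obtain ⟨P, hP : aeval av P = _⟩ := hA hp hp'
  obtain ⟨Q, hQ : aeval av Q = _⟩ := hA hq hq'
  exact ⟨(P, Q), by rw [Phi2, hP, hQ, bP_eq_expand, hf]⟩

/-- The map `(p, q) ↦ p(a₁,a₂,a₃) + q(a₁,a₂,a₃)·b` is injective with image exactly the
invariant ring `S^G`; equivalently, `S^G` is a free module of rank 2 over
`A = 𝔽₃[a₁,a₂,a₃]` with basis `{1, b}`. -/
theorem stmt2 :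
    Function.Injective Phi2 ∧
    Set.range Phi2 = {f : S3 | ∀ g : G3, actS g f = f} := by
  refine ⟨Phi2_injective, Set.Subset.antisymm ?_ fun f hf => ?_⟩
  · rintro _ ⟨pq, rfl⟩ g
    exact actS_Phi2 g pq
  · exact exists_Phi2_eq (hf unipotent) (hf orderFour)
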